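/- Let c₀ be a real number. The function x ↦ (x + c₀)(e - (1 + 1/x)^x) is completely monotonic on (0,∞) if and only if c₀ ≥ 11/12. -/

import Mathlib

open Set Real

/-- `f` is completely monotonic on `s`: smooth on `s` and `(-1)^n f^(n) ≥ 0` on `s`. -/
def CompletelyMonotonicOn (f : ℝ → ℝ) (s : Set ℝ) : Prop :=
  ContDiffOn ℝ (⊤ : ℕ∞) f s ∧ ∀ (n : ℕ), ∀ x ∈ s, 0 ≤ (-1 : ℝ) ^ n * iteratedDerivWithin n f s x

/-- `f` is absolutely monotonic on `s`: smooth on `s` and all derivatives nonnegative. -/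
def AbsolutelyMonotonicOn (f : ℝ → ℝ) (s : Set ℝ) : Prop :=
  ContDiffOn ℝ (⊤ : ℕ∞) f s ∧ ∀ (n : ℕ), ∀ x ∈ s, 0 ≤ iteratedDerivWithin n f s x

/-- `f` is a Bernstein function on `(0,∞)`. -/
def BernsteinOn (f : ℝ → ℝ) (s : Set ℝ) : Prop :=
  ContDiffOn ℝ (⊤ : ℕ∞) f s ∧ (∀ x ∈ s, 0 ≤ f x) ∧
    ∀ (n : ℕ), 1 ≤ n → ∀ x ∈ s, 0 ≤ (-1 : ℝ) ^ (n - 1) * iteratedDerivWithin n f s x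

lemma hasSum_adjust {f g : ℕ → ℝ} {u v : ℝ} (h : HasSum f u) (hfg : ∀ n, g n = f n)
    (huv : v = u) : HasSum g v := by
  have : g = f := funext hfg
  rw [this, huv]; exact h

/-- Power series coefficients of `(1+1/x)^x / e` in `y = 1/(1+x)`. -/
noncomputable def coefA : ℕ → ℝ
  | 0 => 1
  | (n + 1) => -(∑ j : Fin (n + 1), coefA j.1 / ((n : ℝ) - (j.1 : ℝ) + 2)) / ((n : ℝ) + 1)

lemma coefA_zero : coefA 0 = 1 := by rw [coefA]

lemma coefA_succ (n : ℕ) :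
    ((n : ℝ) + 1) * coefA (n + 1) =
      -∑ j ∈ Finset.range (n + 1), coefA j / ((n : ℝ) - (j : ℝ) + 2) := by
  rw [coefA, Finset.sum_range]
  have : (n : ℝ) + 1 ≠ 0 := by positivity
  field_simp

lemma coefA_one : coefA 1 = -1 / 2 := by
  have := coefA_succ 0
  simp [coefA_zero] at this
  rw [this]; norm_num

lemma coefA_two : coefA 2 = -1 / 24 := by
  have := coefA_succ 1
  simp [coefA_zero, Finset.sum_range_succ, coefA_one] at this
  linarith

lemma coefA_step (n : ℕ) (h : ∀ j, j ≤ n → coefA (j + 1) ≤ 0) :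
    coefA (n + 2) ≤ coefA (n + 1) / 12 := by
  have e1 := coefA_succ n
  have e2 := coefA_succ (n + 1)
  rw [Finset.sum_range_succ] at e2
  have hn : (0 : ℝ) ≤ n := Nat.cast_nonneg n
  have key : ((n : ℝ) + 2) / (n + 3) * ∑ j ∈ Finset.range (n + 1), coefA j / ((n : ℝ) - (j : ℝ) + 2)
      ≤ ∑ j ∈ Finset.range (n + 1), coefA j / (((n + 1 : ℕ) : ℝ) - (j : ℝ) + 2) := by
    rw [Finset.mul_sum]
    apply Finset.sum_le_sum
    intro j hj
    have hj' : j ≤ n := by simpa [Nat.lt_succ_iff] using hj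
    have hjr : (j : ℝ) ≤ n := by exact_mod_cast hj'
    have p1 : (0 : ℝ) < (n : ℝ) - j + 2 := by linarith
    have p2 : (0 : ℝ) < (n : ℝ) - j + 3 := by linarith
    have p3 : (0 : ℝ) < (n : ℝ) + 3 := by linarith
    push_cast
    rcases Nat.eq_zero_or_pos j with rfl | hpos
    · rw [coefA_zero]
      apply le_of_eq
      have : (n : ℝ) + 2 ≠ 0 := by positivity
      have : (n : ℝ) + 3 ≠ 0 := by positivity
      have : (n : ℝ) + 1 + 2 ≠ 0 := by positivity
      simp only [Nat.cast_zero, sub_zero]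
      field_simp
      ring
    · obtain ⟨i, rfl⟩ : ∃ i, j = i + 1 := ⟨j - 1, by omega⟩
      have hc := h i (by omega)
      have hb : 1 / ((n : ℝ) + 1 - ((i + 1 : ℕ) : ℝ) + 2) ≤
          ((n : ℝ) + 2) / (n + 3) * (1 / ((n : ℝ) - ((i + 1 : ℕ) : ℝ) + 2)) := by
        rw [div_mul_div_comm, div_le_div_iff₀ (by linarith) (by positivity)]
        have : (0 : ℝ) ≤ ((i + 1 : ℕ) : ℝ) := Nat.cast_nonneg _
        nlinarith
      have := mul_le_mul_of_nonpos_left hb hc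
      push_cast at this ⊢
      calc _ = coefA (i + 1) * (((n : ℝ) + 2) / (n + 3) * (1 / ((n : ℝ) - (i + 1) + 2))) := by ring
        _ ≤ _ := this
        _ = _ := by ring
  have hS : ∑ j ∈ Finset.range (n + 1), coefA j / ((n : ℝ) - (j : ℝ) + 2)
      = -(((n : ℝ) + 1) * coefA (n + 1)) := by linarith
  rw [hS] at key
  push_cast at e2 key
  have hl : (n : ℝ) + 1 - (n + 1) + 2 = 2 := by ring
  rw [hl] at e2
  have hc := h n le_rfl
  have h3 : ((n : ℝ) + 1 + 1) * coefA (n + 2) ≤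
      coefA (n + 1) * (((n : ℝ) + 2) / (n + 3) * (n + 1) - 1 / 2) := by
    have : coefA (n + 1 + 1) = coefA (n + 2) := rfl
    rw [this] at e2
    linarith
  have h4 : ((n : ℝ) + 2) / 12 ≤ ((n : ℝ) + 2) / (n + 3) * (n + 1) - 1 / 2 := by
    have p3 : (0 : ℝ) < (n : ℝ) + 3 := by linarith
    rw [div_mul_eq_mul_div, le_sub_iff_add_le, le_div_iff₀ p3]
    nlinarith
  have h5 := mul_le_mul_of_nonpos_left h4 hc
  have h6 : ((n : ℝ) + 2) * coefA (n + 2) ≤ ((n : ℝ) + 2) * (coefA (n + 1) / 12) := by linarith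
  exact le_of_mul_le_mul_left h6 (by linarith)

lemma coefA_nonpos (n : ℕ) : coefA (n + 1) ≤ 0 := by
  induction n using Nat.strong_induction_on with
  | _ n ih =>
    rcases n with _ | n
    · rw [coefA_one]; norm_num
    · have h1 := coefA_step n (fun j hj => ih j (by omega))
      have h2 := ih n (by omega)
      change coefA (n + 2) ≤ 0
      linarith

lemma coefA_ratio (n : ℕ) : coefA (n + 2) ≤ coefA (n + 1) / 12 :=
  coefA_step n (fun j _ => coefA_nonpos j)

lemma coefA_abs (n : ℕ) : |coefA n| ≤ 1 := by
  rcases n with _ | n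
  · simp [coefA_zero]
  · rw [abs_of_nonpos (coefA_nonpos n)]
    have e1 := coefA_succ n
    rw [Finset.sum_range_succ'] at e1
    have h0 : ∑ j ∈ Finset.range n, coefA (j + 1) / ((n : ℝ) - ((j + 1 : ℕ) : ℝ) + 2) ≤ 0 := by
      apply Finset.sum_nonpos
      intro j hj
      have hj' : j + 1 ≤ n := by simpa using hj
      have hjr : ((j + 1 : ℕ) : ℝ) ≤ n := by exact_mod_cast hj'
      exact div_nonpos_of_nonpos_of_nonneg (coefA_nonpos j) (by linarith)
    have hn : (0 : ℝ) ≤ n := Nat.cast_nonneg n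
    have h1 : coefA 0 / ((n : ℝ) - ((0 : ℕ) : ℝ) + 2) ≤ 1 := by
      rw [coefA_zero, div_le_one] <;> simp <;> linarith
    have := coefA_nonpos n
    nlinarith

lemma summable_of_abs_le_one {a : ℕ → ℝ} (ha : ∀ n, |a n| ≤ 1) {y : ℝ} (hy : |y| < 1) :
    Summable (fun n => a n * y ^ n) := by
  refine Summable.of_norm_bounded (summable_geometric_of_lt_one (abs_nonneg y) hy) ?_
  intro n
  rw [Real.norm_eq_abs, abs_mul, abs_pow]
  exact mul_le_of_le_one_left (by positivity) (ha n)

lemma ps_deriv {a : ℕ → ℝ} (ha : ∀ y : ℝ, |y| < 1 → Summable (fun n => a n * y ^ n)) :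
    ∀ y : ℝ, |y| < 1 → Summable (fun n : ℕ => ((n : ℝ) + 1) * a (n + 1) * y ^ n) ∧
      HasDerivAt (fun y => ∑' n, a n * y ^ n)
        (∑' n : ℕ, ((n : ℝ) + 1) * a (n + 1) * y ^ n) y := by
  intro y hy
  obtain ⟨r, hyr, hr1⟩ := exists_between hy
  obtain ⟨s, hrs, hs1⟩ := exists_between hr1
  have hr0 : 0 < r := lt_of_le_of_lt (abs_nonneg y) hyr
  have hs0 : 0 < s := hr0.trans hrs
  have hsum := ha s (by rwa [abs_of_pos hs0])
  obtain ⟨C, hC⟩ := (hsum.tendsto_atTop_zero.abs).bddAbove_range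
  have hC' : ∀ n, |a n| * s ^ n ≤ C := by
    intro n
    have := hC ⟨n, rfl⟩
    simpa [abs_mul, abs_of_pos hs0] using this
  have hC0 : 0 ≤ C := le_trans (by positivity) (hC' 0)
  have hrs1 : r / s < 1 := (div_lt_one hs0).2 hrs
  have hu : Summable (fun n : ℕ => C / r * ((n : ℝ) ^ 1 * (r / s) ^ n)) := by
    apply Summable.mul_left
    apply summable_pow_mul_geometric_of_norm_lt_one
    rw [Real.norm_eq_abs, abs_of_pos (by positivity)]
    exact hrs1
  have hbound : ∀ (n : ℕ) (z : ℝ), z ∈ Metric.ball (0 : ℝ) r →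
      ‖a n * ((n : ℝ) * z ^ (n - 1))‖ ≤ C / r * ((n : ℝ) ^ 1 * (r / s) ^ n) := by
    intro n z hz
    have hz' : |z| ≤ r := by
      have := Metric.mem_ball.1 hz
      rw [dist_zero_right, Real.norm_eq_abs] at this
      exact this.le
    rcases n with _ | n
    · simp
    · rw [Real.norm_eq_abs, abs_mul, abs_mul, abs_pow, Nat.abs_cast]
      simp only [Nat.add_sub_cancel, pow_one]
      have h1 : |a (n + 1)| ≤ C / s ^ (n + 1) := by
        rw [le_div_iff₀ (by positivity)]; exact hC' _
      calc |a (n + 1)| * (((n + 1 : ℕ) : ℝ) * |z| ^ n)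
          ≤ C / s ^ (n + 1) * (((n + 1 : ℕ) : ℝ) * r ^ n) := by gcongr
        _ = _ := by
          rw [div_pow, pow_succ r]; field_simp
  have hy' : y ∈ Metric.ball (0 : ℝ) r := by
    rw [Metric.mem_ball, dist_zero_right, Real.norm_eq_abs]; exact hyr
  have hd := hasDerivAt_tsum_of_isPreconnected (g := fun n y => a n * y ^ n)
    (g' := fun n y => a n * ((n : ℝ) * y ^ (n - 1))) hu Metric.isOpen_ball
    (convex_ball (0 : ℝ) r).isPreconnected
    (fun n z _ => (hasDerivAt_pow n z).const_mul (a n)) hbound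
    (Metric.mem_ball_self hr0) (ha 0 (by simp)) hy'
  have hsm : Summable (fun n : ℕ => a n * ((n : ℝ) * y ^ (n - 1))) :=
    Summable.of_norm_bounded hu (fun n => hbound n y hy')
  have hsm' : Summable (fun n : ℕ => ((n : ℝ) + 1) * a (n + 1) * y ^ n) := by
    have := (summable_nat_add_iff 1).2 hsm
    refine this.congr (fun n => ?_)
    simp; ring
  refine ⟨hsm', ?_⟩
  refine hd.congr_deriv ?_
  rw [hsm.tsum_eq_zero_add]
  simp
  refine tsum_congr (fun n => ?_)
  ring

/-- The generating function. -/
noncomputable def genG (y : ℝ) : ℝ := ∑' n, coefA n * y ^ n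

/-- coefficients of the logarithm -/
noncomputable def coefS : ℕ → ℝ
  | 0 => 0
  | (n + 1) => 1 / (((n : ℝ) + 1) * ((n : ℝ) + 2))

lemma coefS_abs (n : ℕ) : |coefS n| ≤ 1 := by
  rcases n with _ | n
  · simp [coefS]
  · rw [coefS, abs_of_nonneg (by positivity), div_le_one (by positivity)]
    have hn : (0 : ℝ) ≤ n := Nat.cast_nonneg n
    nlinarith

noncomputable def genS (y : ℝ) : ℝ := ∑' n, coefS n * y ^ n

lemma genG_deriv {y : ℝ} (hy : |y| < 1) :
    HasDerivAt genG (-(genG y * ∑' n : ℕ, 1 / ((n : ℝ) + 2) * y ^ n)) y := by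
  have h := (ps_deriv (fun y hy => summable_of_abs_le_one coefA_abs hy) y hy).2
  refine HasDerivAt.congr_deriv h ?_
  have hq : ∀ n : ℕ, |1 / ((n : ℝ) + 2)| ≤ 1 := by
    intro n
    have hn : (0 : ℝ) ≤ n := Nat.cast_nonneg n
    rw [abs_of_nonneg (by positivity), div_le_one (by positivity)]
    linarith
  symm
  rw [genG, tsum_mul_tsum_eq_tsum_sum_antidiagonal_of_summable_norm
    (summable_of_abs_le_one coefA_abs hy).norm (summable_of_abs_le_one hq hy).norm, ← tsum_neg]
  refine tsum_congr (fun n => ?_)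
  rw [coefA_succ, Finset.Nat.sum_antidiagonal_eq_sum_range_succ
    (fun i j => coefA i * y ^ i * (1 / ((j : ℝ) + 2) * y ^ j)), neg_mul, Finset.sum_mul]
  congr 1
  apply Finset.sum_congr rfl
  intro j hj
  have hj' : j ≤ n := by simpa [Nat.lt_succ_iff] using hj
  rw [Nat.cast_sub hj']
  have : y ^ n = y ^ j * y ^ (n - j) := by rw [← pow_add]; congr 1; omega
  rw [this]; ring

lemma genS_deriv {y : ℝ} (hy : |y| < 1) :
    HasDerivAt genS (∑' n : ℕ, 1 / ((n : ℝ) + 2) * y ^ n) y := by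
  have h := (ps_deriv (fun y hy => summable_of_abs_le_one coefS_abs hy) y hy).2
  refine HasDerivAt.congr_deriv h ?_
  refine tsum_congr (fun n => ?_)
  rw [coefS]
  have : (n : ℝ) + 1 ≠ 0 := by positivity
  field_simp

lemma tsum_zero_pt (a : ℕ → ℝ) : ∑' n, a n * (0 : ℝ) ^ n = a 0 := by
  rw [tsum_eq_single 0]
  · simp
  · intro n hn; simp [hn]

lemma genG_eq {y : ℝ} (hy : |y| < 1) : genG y = Real.exp (-genS y) := by
  have hd : ∀ z ∈ Metric.ball (0 : ℝ) 1, HasDerivAt (fun z => genG z * Real.exp (genS z)) 0 z := by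
    intro z hz
    have hz' : |z| < 1 := by
      have := Metric.mem_ball.1 hz
      rwa [dist_zero_right, Real.norm_eq_abs] at this
    have := (genG_deriv hz').mul (genS_deriv hz').exp
    refine HasDerivAt.congr_deriv this ?_
    ring
  have hc := Metric.isOpen_ball.is_const_of_deriv_eq_zero (convex_ball (0 : ℝ) 1).isPreconnected
    (fun z hz => (hd z hz).differentiableAt.differentiableWithinAt)
    (fun z hz => (hd z hz).deriv)
    (x := y) (y := 0) (by simpa using hy) (by simp)
  simp only [genG, genS, tsum_zero_pt] at hc ⊢
  rw [coefA_zero, coefS] at hc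
  rw [Real.exp_zero, mul_one] at hc
  rw [Real.exp_neg]
  exact (eq_inv_of_mul_eq_one_left hc)

lemma genS_eq {y : ℝ} (hy0 : 0 < y) (hy : y < 1) :
    genS y = 1 + (1 - y) / y * Real.log (1 - y) := by
  have habs : |y| < 1 := by rwa [abs_of_pos hy0]
  have h1 := Real.hasSum_pow_div_log_of_abs_lt_one habs
  have h2 := (hasSum_nat_add_iff' 1).2 h1
  have h3 := h1.sub (h2.mul_left (1 / y))
  have h4 : HasSum (fun n => coefS (n + 1) * y ^ (n + 1)) (1 + (1 - y) / y * Real.log (1 - y)) := by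
    refine hasSum_adjust h3 (fun n => ?_) ?_
    · rw [coefS]
      push_cast
      have : (n : ℝ) + 1 ≠ 0 := by positivity
      have : (n : ℝ) + 2 ≠ 0 := by positivity
      have : (n : ℝ) + 1 + 1 ≠ 0 := by positivity
      field_simp
      ring
    · simp
      field_simp
      ring
  have h5 := (summable_of_abs_le_one coefS_abs habs).tsum_eq_zero_add
  rw [h4.tsum_eq] at h5
  rw [genS, h5]; simp [coefS]

lemma rpow_eq {x : ℝ} (hx : 0 < x) :
    (1 + 1 / x) ^ x = Real.exp 1 * genG (1 / (1 + x)) := by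
  have hx1 : 0 < 1 + x := by linarith
  have hy0 : 0 < 1 / (1 + x) := by positivity
  have hy1 : 1 / (1 + x) < 1 := by rw [div_lt_one hx1]; linarith
  rw [genG_eq (by rwa [abs_of_pos hy0]), genS_eq hy0 hy1, ← Real.exp_add,
    Real.rpow_def_of_pos (by positivity)]
  congr 1
  have e1 : 1 - 1 / (1 + x) = (1 + 1 / x)⁻¹ := by field_simp; ring
  have e2 : (1 - 1 / (1 + x)) / (1 / (1 + x)) = x := by field_simp; ring
  rw [e2, e1, Real.log_inv]
  ring

/-- coefficients of the target function -/
noncomputable def coefD (c : ℝ) : ℕ → ℝ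
  | 0 => Real.exp 1 * (1 / 2)
  | (n + 1) => Real.exp 1 * ((1 - c) * coefA (n + 1) - coefA (n + 2))

lemma coefD_nonneg {c : ℝ} (hc : 11 / 12 ≤ c) (n : ℕ) : 0 ≤ coefD c n := by
  rcases n with _ | n
  · rw [coefD]; positivity
  · rw [coefD]
    apply mul_nonneg (Real.exp_pos 1).le
    have h1 := coefA_ratio n
    have h2 := coefA_nonpos n
    nlinarith

lemma coefD_hasSum (c : ℝ) {x : ℝ} (hx : 0 < x) :
    HasSum (fun n => coefD c n * (1 / (1 + x)) ^ n)
      ((x + c) * (Real.exp 1 - (1 + 1 / x) ^ x)) := by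
  have hx1 : 0 < 1 + x := by linarith
  have hy0 : 0 < 1 / (1 + x) := by positivity
  have hy1 : 1 / (1 + x) < 1 := by rw [div_lt_one hx1]; linarith
  have hs := (summable_of_abs_le_one coefA_abs
    (show |1 / (1 + x)| < 1 by rwa [abs_of_pos hy0])).hasSum
  rw [rpow_eq hx]
  change HasSum _ (genG (1 / (1 + x))) at hs
  have hxy : x = 1 / (1 / (1 + x)) - 1 := by field_simp; ring
  generalize 1 / (1 + x) = y at *
  subst hxy
  have h1 := (hasSum_nat_add_iff' 1).2 hs
  have h2 := (hasSum_nat_add_iff' 2).2 hs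
  simp only [Finset.sum_range_succ, Finset.sum_range_zero, coefA_zero, coefA_one] at h1 h2
  rw [← hasSum_nat_add_iff' 1]
  have h3 := ((h1.mul_left (1 - c)).sub (h2.mul_left (1 / y))).mul_left (Real.exp 1)
  refine hasSum_adjust h3 (fun n => ?_) ?_
  · rw [coefD]
    field_simp
    ring
  · simp [coefD]
    field_simp
    ring

/-- Nonnegative combinations of `(1+x)^{-k}`: the derivative formula. -/
lemma series_deriv {d : ℕ → ℝ} {f : ℝ → ℝ}
    (hf : ∀ x : ℝ, 0 < x → HasSum (fun n => d n * (1 / (1 + x)) ^ n) (f x)) :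
    ∀ x : ℝ, 0 < x → ∃ v, HasDerivAt f v x ∧
      HasSum (fun n : ℕ => (((n - 1 : ℕ) : ℝ) * d (n - 1)) * (1 / (1 + x)) ^ n) (-v) := by
  have hs : ∀ y : ℝ, |y| < 1 → Summable (fun n => d n * y ^ n) := by
    intro y hy
    obtain ⟨r, hyr, hr1⟩ := exists_between hy
    have hr0 : 0 < r := lt_of_le_of_lt (abs_nonneg y) hyr
    have h := (hf (1 / r - 1) (by rw [sub_pos, lt_div_iff₀ hr0]; linarith)).summable
    have e : 1 / (1 + (1 / r - 1)) = r := by field_simp; ring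
    rw [e] at h
    refine Summable.of_norm_bounded h.norm ?_
    intro n
    simp only [norm_mul, norm_pow, Real.norm_eq_abs]
    rw [abs_of_pos hr0]
    gcongr
  intro x hx
  have hx1 : 0 < 1 + x := by linarith
  have hy0 : 0 < 1 / (1 + x) := by positivity
  have hy1 : 1 / (1 + x) < 1 := by rw [div_lt_one hx1]; linarith
  obtain ⟨hsum, hder⟩ := ps_deriv hs (1 / (1 + x)) (by rwa [abs_of_pos hy0])
  have hinv : HasDerivAt (fun x : ℝ => 1 / (1 + x)) (-(1 / (1 + x)) ^ 2) x := by
    have := ((hasDerivAt_id x).const_add 1).inv hx1.ne'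
    simp only [id, one_div] at this ⊢
    refine HasDerivAt.congr_deriv this ?_
    field_simp
  have hcomp := hder.comp x hinv
  refine ⟨_, hcomp.congr_of_eventuallyEq ?_, ?_⟩
  · filter_upwards [Ioi_mem_nhds hx] with z hz
    exact (hf z hz).tsum_eq.symm
  · rw [← hasSum_nat_add_iff' 2]
    have h3 := hsum.hasSum.mul_left ((1 / (1 + x)) ^ 2)
    refine hasSum_adjust h3 (fun n => ?_) ?_
    · have e : n + 2 - 1 = n + 1 := rfl
      rw [e]
      push_cast
      generalize 1 / (1 + x) = y
      ring
    · simp [Finset.sum_range_succ]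
      ring

lemma series_iter {f : ℝ → ℝ} {d : ℕ → ℝ} (hd : ∀ n, 0 ≤ d n)
    (hf : ∀ x : ℝ, 0 < x → HasSum (fun n => d n * (1 / (1 + x)) ^ n) (f x)) (m : ℕ) :
    ∃ e : ℕ → ℝ, (∀ n, 0 ≤ e n) ∧ ∀ x : ℝ, 0 < x →
      HasSum (fun n => e n * (1 / (1 + x)) ^ n)
        ((-1 : ℝ) ^ m * iteratedDerivWithin m f (Set.Ioi 0) x) := by
  induction m with
  | zero => exact ⟨d, hd, by simpa using hf⟩
  | succ m ih =>
    obtain ⟨e, he, hes⟩ := ih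
    refine ⟨fun n => ((n - 1 : ℕ) : ℝ) * e (n - 1), fun n => mul_nonneg (Nat.cast_nonneg _) (he _), ?_⟩
    intro x hx
    obtain ⟨v, hv, hsum⟩ := series_deriv hes x hx
    refine hasSum_adjust hsum (fun n => rfl) ?_
    rw [iteratedDerivWithin_succ, derivWithin_of_isOpen isOpen_Ioi hx]
    have h2 : HasDerivAt (iteratedDerivWithin m f (Set.Ioi 0)) ((-1 : ℝ) ^ m * v) x := by
      have := hv.const_mul ((-1 : ℝ) ^ m)
      refine this.congr_of_eventuallyEq (Filter.Eventually.of_forall (fun z => ?_))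
      simp only []
      rw [← mul_assoc, ← mul_pow]; simp
    rw [h2.deriv, ← mul_assoc, ← pow_add, show m + 1 + m = 2 * m + 1 by ring, pow_succ, pow_mul]
    simp

lemma target_smooth (c : ℝ) : ContDiffOn ℝ (⊤ : ℕ∞)
    (fun x : ℝ => (x + c) * (Real.exp 1 - (1 + 1 / x) ^ x)) (Set.Ioi 0) := by
  have h : ContDiffOn ℝ (⊤ : ℕ∞)
      (fun x : ℝ => (x + c) * (Real.exp 1 - Real.exp (Real.log (1 + 1 / x) * x))) (Set.Ioi 0) := by
    have h1 : ContDiffOn ℝ (⊤ : ℕ∞) (fun x : ℝ => 1 + 1 / x) (Set.Ioi 0) :=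
      contDiffOn_const.add (contDiffOn_const.div contDiffOn_id (fun x hx => ne_of_gt hx))
    have h2 := h1.log (fun x (hx : 0 < x) => by positivity)
    exact (contDiffOn_id.add contDiffOn_const).mul
      (contDiffOn_const.sub (h2.mul contDiffOn_id).exp)
  refine h.congr ?_
  intro x hx
  have hx' : (0 : ℝ) < x := hx
  rw [Real.rpow_def_of_pos (by positivity)]

open Filter Topology in
lemma necessity (c : ℝ) (h : CompletelyMonotonicOn
      (fun x : ℝ => (x + c) * (Real.exp 1 - (1 + 1 / x) ^ x)) (Set.Ioi 0)) : 11 / 12 ≤ c := by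
  obtain ⟨hsm, hder⟩ := h
  set f := (fun x : ℝ => (x + c) * (Real.exp 1 - (1 + 1 / x) ^ x)) with hfdef
  have hf : ∀ x : ℝ, 0 < x → HasSum (fun n => coefD c n * (1 / (1 + x)) ^ n) (f x) :=
    fun x hx => coefD_hasSum c hx
  have hanti : AntitoneOn f (Set.Ioi 0) := by
    apply antitoneOn_of_deriv_nonpos (convex_Ioi 0) hsm.continuousOn
    · rw [interior_Ioi]
      exact hsm.differentiableOn (by simp)
    · rw [interior_Ioi]
      intro x hx
      have := hder 1 x hx
      rw [iteratedDerivWithin_one, derivWithin_of_isOpen isOpen_Ioi hx] at this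
      linarith
  -- power series in y
  have hs : ∀ y : ℝ, |y| < 1 → Summable (fun n => coefD c n * y ^ n) := by
    intro y hy
    obtain ⟨r, hyr, hr1⟩ := exists_between hy
    have hr0 : 0 < r := lt_of_le_of_lt (abs_nonneg y) hyr
    have h := (hf (1 / r - 1) (by rw [sub_pos, lt_div_iff₀ hr0]; linarith)).summable
    have e : 1 / (1 + (1 / r - 1)) = r := by field_simp; ring
    rw [e] at h
    refine Summable.of_norm_bounded h.norm ?_
    intro n
    simp only [norm_mul, norm_pow, Real.norm_eq_abs]
    rw [abs_of_pos hr0]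
    gcongr
  set F : ℝ → ℝ := fun y => ∑' n, coefD c n * y ^ n with hF
  have hFd : HasDerivAt F (coefD c 1) 0 := by
    have := (ps_deriv hs 0 (by simp)).2
    rw [tsum_zero_pt (fun n => ((n : ℝ) + 1) * coefD c (n + 1))] at this
    simpa using this
  have hFmono : MonotoneOn F (Set.Ioo 0 1) := by
    intro y hy z hz hyz
    have hy' : 0 < 1 / y - 1 := by rw [sub_pos, lt_div_iff₀ hy.1]; linarith [hy.2]
    have hz' : 0 < 1 / z - 1 := by rw [sub_pos, lt_div_iff₀ hz.1]; linarith [hz.2]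
    have e1 : 1 / (1 + (1 / y - 1)) = y := by simp
    have e2 : 1 / (1 + (1 / z - 1)) = z := by simp
    have g1 := (hf _ hy').tsum_eq
    have g2 := (hf _ hz').tsum_eq
    rw [e1] at g1
    rw [e2] at g2
    change F y = _ at g1
    change F z = _ at g2
    rw [g1, g2]
    apply hanti hz' hy'
    have := one_div_le_one_div_of_le hy.1 hyz
    linarith
  have hF0 : ∀ z ∈ Set.Ioo (0 : ℝ) 1, F 0 ≤ F z := by
    intro z hz
    have ht : Tendsto F (𝓝[>] 0) (𝓝 (F 0)) := hFd.continuousAt.tendsto.mono_left nhdsWithin_le_nhds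
    apply le_of_tendsto ht
    filter_upwards [Ioo_mem_nhdsGT hz.1] with w hw
    exact hFmono ⟨hw.1, hw.2.trans hz.2⟩ hz hw.2.le
  have hd1 : 0 ≤ coefD c 1 := by
    have ht := hFd.tendsto_slope_zero_right
    apply ge_of_tendsto ht
    filter_upwards [Ioo_mem_nhdsGT (show (0 : ℝ) < 1 by norm_num)] with w hw
    have := hF0 w hw
    rw [zero_add, smul_eq_mul]
    exact mul_nonneg (inv_nonneg.2 hw.1.le) (sub_nonneg.2 this)
  rw [coefD] at hd1
  have := nonneg_of_mul_nonneg_right hd1 (Real.exp_pos 1)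
  simp only [zero_add, coefA_one, coefA_two] at this
  linarith

theorem stmt_19 (c₀ : ℝ) :
    CompletelyMonotonicOn
      (fun x : ℝ => (x + c₀) * (Real.exp 1 - (1 + 1 / x) ^ x)) (Set.Ioi 0) ↔
    c₀ ≥ 11 / 12 := by
  refine ⟨necessity c₀, fun hc => ⟨target_smooth c₀, fun n x hx => ?_⟩⟩
  obtain ⟨e, he, hes⟩ := series_iter (coefD_nonneg hc) (fun x hx => coefD_hasSum c₀ hx) n
  have hx' : (0 : ℝ) < x := hx
  exact (hes x hx').nonneg (fun k => mul_nonneg (he k) (by positivity))
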